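/- Let Ω ⊆ ℝⁿ be a nonempty open connected set, let f ∈ C¹(ℝ), and let u ∈ C³(Ω) ∩ C¹(cl Ω) satisfy M[u] + f(u) = 0 in Ω. Suppose sup_Ω |f(u)| < ∞, f′(u(x)) ≤ 0 for every x ∈ Ω, and inf_Ω u > −∞. Then for every x ∈ Ω, |∇u(x)| ≤ max{ √(n/2), sup_{∂Ω} |∇u| } (the supremum over ∂Ω interpreted in [0,∞], so that if ∂Ω = ∅ the conclusion reads |∇u| ≤ √(n/2) on Ω). -/

import Mathlib

open MeasureTheory Set Metric Filter
open scoped RealInnerProductSpace Topology ENNReal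

noncomputable section

variable {n : ℕ}

/-- The quasilinear operator matrix `A(p)` applied to a vector `v`:
`A(p)v = a(|p|) v + (a'(|p|)/|p|) ⟨p,v⟩ p` (with the second term vanishing at `p = 0`). -/
def Aop (a : ℝ → ℝ) (p v : EuclideanSpace ℝ (Fin n)) : EuclideanSpace ℝ (Fin n) :=
  a ‖p‖ • v + ((deriv a ‖p‖ / ‖p‖) * ⟪p, v⟫) • p

/-- `λ₁(t) = a(t) + t·a'(t) = (t a(t))'`. -/
def lam1 (a : ℝ → ℝ) (t : ℝ) : ℝ := a t + t * deriv a t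

/-- `λ₂(t) = a(t)`. -/
def lam2 (a : ℝ → ℝ) (t : ℝ) : ℝ := a t

/-- `λmax(t) = max{λ₁(t), λ₂(t)}`. -/
def lamMax (a : ℝ → ℝ) (t : ℝ) : ℝ := max (lam1 a t) (lam2 a t)

/-- A Lipschitz test function with compact support contained in `Ω`. -/
def IsTestOn (Ω : Set (EuclideanSpace ℝ (Fin n))) (φ : EuclideanSpace ℝ (Fin n) → ℝ) : Prop :=
  (∃ K, LipschitzWith K φ) ∧ HasCompactSupport φ ∧ tsupport φ ⊆ Ω

/-- `u` is a weak solution of `div(a(|∇u|)∇u) + f(u) = 0` in `Ω`. -/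
def IsWeakSolution (a f : ℝ → ℝ) (Ω : Set (EuclideanSpace ℝ (Fin n)))
    (u : EuclideanSpace ℝ (Fin n) → ℝ) : Prop :=
  ∀ φ : EuclideanSpace ℝ (Fin n) → ℝ, IsTestOn Ω φ →
    ∫ x in Ω, a ‖gradient u x‖ * ⟪gradient u x, gradient φ x⟫
      = ∫ x in Ω, f (u x) * φ x

/-- The stability inequality for a solution `u`. -/
def IsStable (a f : ℝ → ℝ) (Ω : Set (EuclideanSpace ℝ (Fin n)))
    (u : EuclideanSpace ℝ (Fin n) → ℝ) : Prop :=
  ∀ φ : EuclideanSpace ℝ (Fin n) → ℝ, IsTestOn Ω φ →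
    ∫ x in Ω, deriv f (u x) * φ x ^ 2
      ≤ ∫ x in Ω, ⟪Aop a (gradient u x) (gradient φ x), gradient φ x⟫

/-- `u` has moderate energy growth in `Ω₀`. -/
def ModerateEnergyGrowth (a : ℝ → ℝ) (u : EuclideanSpace ℝ (Fin n) → ℝ)
    (Ω₀ : Set (EuclideanSpace ℝ (Fin n))) : Prop :=
  ∃ φ : ℕ → EuclideanSpace ℝ (Fin n) → ℝ,
    (∀ j, ∃ K, LipschitzWith K (φ j)) ∧
    (∀ j, HasCompactSupport (φ j)) ∧
    (∀ j x, 0 ≤ φ j x) ∧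
    (∀ K : Set (EuclideanSpace ℝ (Fin n)), IsCompact K → K ⊆ closure Ω₀ →
      TendstoUniformlyOn (fun j => φ j) (fun _ => (1 : ℝ)) atTop K) ∧
    Tendsto (fun j => ∫ x in Ω₀, ‖gradient u x‖ ^ 2 *
        ⟪Aop a (gradient u x) (gradient (φ j) x), gradient (φ j) x⟫)
      atTop (nhds 0)

/-- A `C^k` domain: nonempty, open, connected, with boundary locally given by a regular
`C^k` defining function. -/
def IsCkDomain (k : ℕ∞) (Ω : Set (EuclideanSpace ℝ (Fin n))) : Prop :=
  Ω.Nonempty ∧ IsOpen Ω ∧ IsConnected Ω ∧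
    ∀ p ∈ frontier Ω, ∃ V : Set (EuclideanSpace ℝ (Fin n)),
      ∃ g : EuclideanSpace ℝ (Fin n) → ℝ,
        IsOpen V ∧ p ∈ V ∧ ContDiffOn ℝ k g V ∧ (∀ x ∈ V, gradient g x ≠ 0) ∧
        Ω ∩ V = {x ∈ V | g x < 0}

/-- A `C^k` domain together with its interior unit normal field `η`. -/
def IsCkDomainWithNormal (k : ℕ∞) (Ω : Set (EuclideanSpace ℝ (Fin n)))
    (η : EuclideanSpace ℝ (Fin n) → EuclideanSpace ℝ (Fin n)) : Prop :=
  Ω.Nonempty ∧ IsOpen Ω ∧ IsConnected Ω ∧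
    ∀ p ∈ frontier Ω, ∃ V : Set (EuclideanSpace ℝ (Fin n)),
      ∃ g : EuclideanSpace ℝ (Fin n) → ℝ,
        IsOpen V ∧ p ∈ V ∧ ContDiffOn ℝ k g V ∧ (∀ x ∈ V, gradient g x ≠ 0) ∧
        Ω ∩ V = {x ∈ V | g x < 0} ∧
        η p = -(‖gradient g p‖⁻¹ • gradient g p)

/-- `a ∈ C^{1,1}_loc([0,∞))`: `C¹` on `[0,∞)` with locally Lipschitz derivative. -/
def C11Loc (a : ℝ → ℝ) : Prop :=
  ContDiffOn ℝ 1 a (Ici 0) ∧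
    ∀ t ∈ Ici (0 : ℝ), ∃ V ∈ 𝓝[Ici (0 : ℝ)] t, ∃ K, LipschitzOnWith K (deriv a) V

/-- The mean curvature operator `M[u] = div(∇u/√(1+|∇u|²))`, written as the trace of the
derivative of the vector field `x ↦ (1+|∇u|²)^{-1/2} ∇u`. -/
def meanCurv (u : EuclideanSpace ℝ (Fin n) → ℝ) (x : EuclideanSpace ℝ (Fin n)) : ℝ :=
  ∑ i : Fin n,
    ⟪(fderiv ℝ (fun y => (Real.sqrt (1 + ‖gradient u y‖ ^ 2))⁻¹ • gradient u y) x)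
        (EuclideanSpace.single i (1 : ℝ)),
      EuclideanSpace.single i (1 : ℝ)⟫

/-- Second derivative test at a local maximum. -/
lemma second_deriv_test (g g' : ℝ → ℝ) (c : ℝ) (hmax : IsLocalMax g 0)
    (h1 : ∀ᶠ s in 𝓝 (0 : ℝ), HasDerivAt g (g' s) s) (h2 : HasDerivAt g' c 0) :
    g' 0 = 0 ∧ c ≤ 0 := by
  have h0 : g' 0 = 0 := hmax.hasDerivAt_eq_zero h1.self_of_nhds
  refine ⟨h0, ?_⟩
  by_contra hc
  push Not at hc
  have hd : deriv g =ᶠ[𝓝 0] g' := h1.mono fun s hs => hs.deriv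
  have hdd : deriv (deriv g) 0 = c := by
    rw [hd.deriv_eq]; exact h2.deriv
  have hmin : IsLocalMin g 0 := by
    apply isLocalMin_of_deriv_deriv_pos
    · rw [hdd]; exact hc
    · rw [hd.self_of_nhds]; exact h0
    · exact h1.self_of_nhds.continuousAt
  have hconst : g =ᶠ[𝓝 0] fun _ => g 0 := by
    filter_upwards [hmin, hmax] with s hs hs'
    exact le_antisymm hs' hs
  have : deriv (deriv g) 0 = 0 := by
    have h3 : deriv g =ᶠ[𝓝 0] deriv (fun _ : ℝ => g 0) := hconst.deriv
    rw [h3.deriv_eq]; simp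
  linarith

local notation "𝔼" => EuclideanSpace ℝ (Fin n)

/-- Standard basis vector. -/
def eb (i : Fin n) : EuclideanSpace ℝ (Fin n) := EuclideanSpace.single i (1 : ℝ)

/-- The vector `R e_k`, with `R = I - σ p pᵀ`, `R² = (I + p pᵀ)⁻¹`. -/
def rb (p : EuclideanSpace ℝ (Fin n)) (i : Fin n) : EuclideanSpace ℝ (Fin n) :=
  eb i - ((Real.sqrt (1 + ‖p‖ ^ 2) * (Real.sqrt (1 + ‖p‖ ^ 2) + 1))⁻¹ * ⟪eb i, p⟫) • p

lemma eb_sum (p : 𝔼) : ∑ i, ⟪eb i, p⟫ • eb i = p := by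
  have := (EuclideanSpace.basisFun (Fin n) ℝ).sum_repr' p
  simpa [eb] using this

lemma eb_sum_inner (p q : 𝔼) : ∑ i, ⟪eb i, p⟫ * ⟪eb i, q⟫ = ⟪p, q⟫ := by
  conv_rhs => rw [← eb_sum p]
  rw [sum_inner]
  simp [inner_smul_left]

lemma rb_trace (p : 𝔼) (L : 𝔼 →ₗ[ℝ] 𝔼 →ₗ[ℝ] ℝ) :
    ∑ i, L (rb p i) (rb p i) = (∑ i, L (eb i) (eb i)) - L p p / (1 + ‖p‖ ^ 2) := by
  have e1 : ∑ i, ⟪eb i, p⟫ * L (eb i) p = L p p := by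
    conv_rhs => enter [1]; rw [← eb_sum p]
    simp
  have e2 : ∑ i, ⟪eb i, p⟫ * L p (eb i) = L p p := by
    conv_rhs => enter [2]; rw [← eb_sum p]
    simp
  have e3 : ∑ i, ⟪eb i, p⟫ * ⟪eb i, p⟫ = ‖p‖ ^ 2 := by
    rw [eb_sum_inner, real_inner_self_eq_norm_sq]
  set W := Real.sqrt (1 + ‖p‖ ^ 2) with hW
  have hWpos : 0 < W := Real.sqrt_pos.2 (by positivity)
  have hWsq : W ^ 2 = 1 + ‖p‖ ^ 2 := Real.sq_sqrt (by positivity)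
  have key : ∀ i, L (rb p i) (rb p i) = L (eb i) (eb i)
      - (W * (W + 1))⁻¹ * (⟪eb i, p⟫ * L (eb i) p)
      - (W * (W + 1))⁻¹ * (⟪eb i, p⟫ * L p (eb i))
      + ((W * (W + 1))⁻¹ ^ 2 * L p p) * (⟪eb i, p⟫ * ⟪eb i, p⟫) := by
    intro i
    simp only [rb, map_sub, map_smul, LinearMap.sub_apply, LinearMap.smul_apply, smul_eq_mul, ← hW]
    ring
  simp only [key, Finset.sum_add_distrib, Finset.sum_sub_distrib, ← Finset.mul_sum, e1, e2, e3]
  rw [← hWsq]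
  have : ‖p‖ ^ 2 = W ^ 2 - 1 := by linarith
  rw [this]
  field_simp
  ring

/-- The jet inequality: `|A|² ≥ H²/n`. -/
lemma rb_cauchy (p : 𝔼) (B : 𝔼 →L[ℝ] 𝔼) (hB : ∀ a b, ⟪B a, b⟫ = ⟪a, B b⟫) :
    ((∑ i, ⟪B (eb i), eb i⟫) - ⟪B p, p⟫ / (1 + ‖p‖ ^ 2)) ^ 2 ≤
      n * ((∑ i, ‖B (eb i)‖ ^ 2) - 2 * ‖B p‖ ^ 2 / (1 + ‖p‖ ^ 2)
        + ⟪B p, p⟫ ^ 2 / (1 + ‖p‖ ^ 2) ^ 2) := by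
  have t1 : ∑ i, ⟪B (rb p i), rb p i⟫ = (∑ i, ⟪B (eb i), eb i⟫) - ⟪B p, p⟫ / (1 + ‖p‖ ^ 2) := by
    have := rb_trace p (LinearMap.mk₂ ℝ (fun v w => ⟪B v, w⟫)
      (by intros; simp [inner_add_left]) (by intros; simp [inner_smul_left])
      (by intros; simp [inner_add_right]) (by intros; simp [inner_smul_right]))
    simpa using this
  have gam : ∀ w : 𝔼, ∑ i, ⟪w, rb p i⟫ ^ 2 = ‖w‖ ^ 2 - ⟪w, p⟫ ^ 2 / (1 + ‖p‖ ^ 2) := by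
    intro w
    have := rb_trace p (LinearMap.mk₂ ℝ (fun v v' => ⟪w, v⟫ * ⟪w, v'⟫)
      (by intros; simp [inner_add_right]; ring) (by intros; simp [inner_smul_right]; ring)
      (by intros; simp [inner_add_right]; ring) (by intros; simp [inner_smul_right]; ring))
    simp only [LinearMap.mk₂_apply] at this
    have h3 := eb_sum_inner w w
    rw [real_inner_self_eq_norm_sq] at h3
    simp only [real_inner_comm w] at this h3 ⊢
    simp only [sq] at this h3 ⊢
    rw [this]
    rw [← h3]
  have t2 : ∑ k, ∑ i, ⟪B (rb p k), rb p i⟫ ^ 2 =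
      (∑ i, ‖B (eb i)‖ ^ 2) - 2 * ‖B p‖ ^ 2 / (1 + ‖p‖ ^ 2)
        + ⟪B p, p⟫ ^ 2 / (1 + ‖p‖ ^ 2) ^ 2 := by
    simp only [gam]
    have := rb_trace p (LinearMap.mk₂ ℝ
      (fun v v' => ⟪B v, B v'⟫ - ⟪B v, p⟫ * ⟪B v', p⟫ / (1 + ‖p‖ ^ 2))
      (by intros; simp [inner_add_left]; ring) (by intros; simp [inner_smul_left]; ring)
      (by intros; simp [inner_add_right, inner_add_left]; ring)
      (by intros; simp [inner_smul_right, inner_smul_left]; ring))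
    simp only [LinearMap.mk₂_apply, real_inner_self_eq_norm_sq, ← sq] at this
    rw [this, Finset.sum_sub_distrib, ← Finset.sum_div]
    have h4 : ∑ i, ⟪B (eb i), p⟫ ^ 2 = ‖B p‖ ^ 2 := by
      simp only [hB, sq]
      rw [eb_sum_inner, real_inner_self_eq_norm_sq, sq]
    rw [h4]
    have : (1 + ‖p‖ ^ 2) ≠ 0 := by positivity
    field_simp
    ring
  rw [← t1, ← t2]
  calc (∑ i, ⟪B (rb p i), rb p i⟫) ^ 2 ≤ n * ∑ i, ⟪B (rb p i), rb p i⟫ ^ 2 := by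
        have := sq_sum_le_card_mul_sum_sq (s := (Finset.univ : Finset (Fin n)))
          (f := fun i => ⟪B (rb p i), rb p i⟫)
        simpa using this
    _ ≤ _ := by
        gcongr with k
        exact Finset.single_le_sum (f := fun i => ⟪B (rb p k), rb p i⟫ ^ 2)
          (fun i _ => sq_nonneg _) (Finset.mem_univ k)

/-- Pure algebra behind the jet inequality. -/
lemma jet_algebra (nn β b b2 F2 P Q X r2 Θ θ W f f' η E t ε : ℝ) (hn : 0 < nn)
    (hP : 0 ≤ P) (hQ : Q = 1 + P) (hW : 0 < W) (hWQ : W ^ 2 = Q) (hη : 0 < η) (hE : 0 < E)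
    (hf' : f' ≤ 0)
    (h1 : β * Q - b + f * W ^ 3 = 0)
    (h2 : Θ * Q + β * (2 * b) - (θ + 2 * b2) + (f' * P * W ^ 3 + f * (3 * W * b)) = 0)
    (hA : (β - b / Q) ^ 2 ≤ nn * (F2 - 2 * b2 / Q + b ^ 2 / Q ^ 2))
    (hb : η * b = Q * E * (t * P + 2 * ε * X))
    (hb2 : η ^ 2 * b2 = Q ^ 2 * E ^ 2 * (t ^ 2 * P + 4 * t * ε * X + 4 * ε ^ 2 * r2))
    (hs : η ^ 2 * ((Θ - θ / Q) + (F2 - b2 / Q))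
      - 3 * Q * E ^ 2 * ((t ^ 2 * P + 4 * t * ε * X + 4 * ε ^ 2 * r2) - (t * P + 2 * ε * X) ^ 2 / Q)
      + Q * η * E * (((t ^ 2 * P + 4 * t * ε * X + 4 * ε ^ 2 * r2) - (t * P + 2 * ε * X) ^ 2 / Q)
        - t * (β - b / Q) - 2 * ε * (nn - P / Q)) ≤ 0) :
    η / E * (f ^ 2 / nn) + t * f / W - 2 * ε * f * X / W + t ^ 2 * P / Q + 4 * t * ε * X / Q
      + 4 * ε ^ 2 * (r2 - X ^ 2 / Q) - 2 * ε * nn + 2 * ε * P / Q ≤ 0 := by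
  have hQ0 : 0 < Q := by rw [hQ]; linarith
  have hW3 : W ^ 3 = W * Q := by rw [← hWQ]; ring
  have hβ : β = b / Q - f * W := by
    rw [hW3] at h1
    field_simp
    linarith
  set S2 := F2 - 2 * b2 / Q + b ^ 2 / Q ^ 2 with hS2
  set G2 := (t ^ 2 * P + 4 * t * ε * X + 4 * ε ^ 2 * r2) - (t * P + 2 * ε * X) ^ 2 / Q with hG2
  have hA' : f ^ 2 / nn ≤ S2 / Q := by
    rw [hβ] at hA
    have : f ^ 2 * Q ≤ nn * S2 := by
      calc f ^ 2 * Q = (b / Q - f * W - b / Q) ^ 2 := by rw [← hWQ]; ring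
        _ ≤ _ := hA
    rw [div_le_div_iff₀ hn hQ0]
    linarith
  have hγ : η ^ 2 * (b2 - b ^ 2 / Q) = Q ^ 2 * E ^ 2 * G2 := by
    have : η ^ 2 * (b ^ 2 / Q) = (Q * E * (t * P + 2 * ε * X)) ^ 2 / Q := by rw [← hb]; ring
    rw [mul_sub, hb2, this, hG2]; ring
  have hΘ : Θ - θ / Q = 2 * (b2 - b ^ 2 / Q) / Q - f * W * b / Q - f' * P * W := by
    rw [hW3, hβ] at h2
    have : Θ = (2 * (b2 - b ^ 2 / Q) / Q - f * W * b / Q - f' * P * W) + θ / Q := by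
      field_simp
      field_simp at h2
      linarith
    linarith
  have hF : F2 - b2 / Q = S2 + (b2 - b ^ 2 / Q) / Q := by
    rw [hS2]; field_simp; ring
  have hs2 : η ^ 2 * (S2 - f * W * b / Q - f' * P * W)
      + Q * η * E * (G2 + t * f * W - 2 * ε * (nn - P / Q)) ≤ 0 := by
    have e : t * (β - b / Q) = - (t * f * W) := by rw [hβ]; ring
    rw [hΘ, hF, e] at hs
    have e2 : η ^ 2 * (2 * (b2 - b ^ 2 / Q) / Q - f * W * b / Q - f' * P * W +
        (S2 + (b2 - b ^ 2 / Q) / Q)) = 3 * (η ^ 2 * (b2 - b ^ 2 / Q)) / Q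
        + η ^ 2 * (S2 - f * W * b / Q - f' * P * W) := by ring
    rw [e2, hγ] at hs
    have e3 : 3 * (Q ^ 2 * E ^ 2 * G2) / Q = 3 * Q * E ^ 2 * G2 := by field_simp
    rw [e3] at hs
    linarith
  have hs3 : η ^ 2 * S2 - η * f * W * (E * (t * P + 2 * ε * X))
      + Q * η * E * (G2 + t * f * W - 2 * ε * (nn - P / Q)) ≤ 0 := by
    have e : η ^ 2 * (f * W * b / Q) = η * f * W * (E * (t * P + 2 * ε * X)) := by
      calc η ^ 2 * (f * W * b / Q) = η * f * W * (η * b) / Q := by ring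
        _ = _ := by rw [hb]; field_simp
    have : 0 ≤ η ^ 2 * (-f' * P * W) := by
      have : 0 ≤ -f' := by linarith
      positivity
    linarith
  have hs4 : η / E * (S2 / Q) - f * W * (t * P + 2 * ε * X) / Q
      + (G2 + t * f * W - 2 * ε * (nn - P / Q)) ≤ 0 := by
    have : (η / E * (S2 / Q) - f * W * (t * P + 2 * ε * X) / Q
      + (G2 + t * f * W - 2 * ε * (nn - P / Q))) * (Q * η * E) = η ^ 2 * S2
      - η * f * W * (E * (t * P + 2 * ε * X))
      + Q * η * E * (G2 + t * f * W - 2 * ε * (nn - P / Q)) := by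
      field_simp
    rw [← this] at hs3
    exact nonpos_of_mul_nonpos_left hs3 (by positivity)
  have hs5 : η / E * (f ^ 2 / nn) ≤ η / E * (S2 / Q) := by gcongr
  have hPQ : P = Q - 1 := by linarith
  have e5 : t * f / W - 2 * ε * f * X / W + t ^ 2 * P / Q + 4 * t * ε * X / Q
      + 4 * ε ^ 2 * (r2 - X ^ 2 / Q) - 2 * ε * nn + 2 * ε * P / Q =
      - f * W * (t * P + 2 * ε * X) / Q
      + (G2 + t * f * W - 2 * ε * (nn - P / Q)) := by
    rw [hG2, hPQ, ← hWQ]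
    field_simp
    ring
  have e6 : - f * W * (t * P + 2 * ε * X) / Q = - (f * W * (t * P + 2 * ε * X) / Q) := by ring
  rw [e6] at e5
  linarith

/-- Jet inequality at an interior maximum. -/
lemma jet_ineq (hn : 0 < n) (p x : 𝔼) (B : 𝔼 →L[ℝ] 𝔼) (T : 𝔼 →L[ℝ] 𝔼 →L[ℝ] 𝔼)
    (hB : ∀ a b, ⟪B a, b⟫ = ⟪a, B b⟫) (hT1 : ∀ a b, T a b = T b a)
    (hT2 : ∀ a b c, ⟪T a b, c⟫ = ⟪b, T a c⟫)
    (W f f' η E t ε : ℝ) (hW : 0 < W) (hWQ : W ^ 2 = 1 + ‖p‖ ^ 2) (hη : 0 < η) (hE : 0 < E)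
    (hf' : f' ≤ 0)
    (h1 : (∑ i, ⟪B (eb i), eb i⟫) * (1 + ‖p‖ ^ 2) - ⟪B p, p⟫ + f * W ^ 3 = 0)
    (h2 : (∑ i, ⟪T p (eb i), eb i⟫) * (1 + ‖p‖ ^ 2) + (∑ i, ⟪B (eb i), eb i⟫) * (2 * ⟪B p, p⟫)
      - (⟪T p p, p⟫ + 2 * ‖B p‖ ^ 2) + (f' * ‖p‖ ^ 2 * W ^ 3 + f * (3 * W * ⟪B p, p⟫)) = 0)
    (hfirst : ∀ v, (2 * ⟪B v, p⟫) * η ^ 2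
      + (1 + ‖p‖ ^ 2) * (2 * η * (-E * (t * ⟪p, v⟫ + 2 * ε * ⟪x, v⟫))) = 0)
    (hsecond : ∀ v, (2 * ⟪T v v, p⟫ + 2 * ‖B v‖ ^ 2) * η ^ 2
      + 2 * ((2 * ⟪B v, p⟫) * (2 * η * (-E * (t * ⟪p, v⟫ + 2 * ε * ⟪x, v⟫))))
      + (1 + ‖p‖ ^ 2) * (2 * (-E * (t * ⟪p, v⟫ + 2 * ε * ⟪x, v⟫)) ^ 2
        + 2 * η * (E * ((t * ⟪p, v⟫ + 2 * ε * ⟪x, v⟫) ^ 2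
          - (t * ⟪B v, v⟫ + 2 * ε * ‖v‖ ^ 2)))) ≤ 0) :
    η / E * (f ^ 2 / n) + t * f / W - 2 * ε * f * ⟪x, p⟫ / W + t ^ 2 * ‖p‖ ^ 2 / (1 + ‖p‖ ^ 2)
      + 4 * t * ε * ⟪x, p⟫ / (1 + ‖p‖ ^ 2)
      + 4 * ε ^ 2 * (‖x‖ ^ 2 - ⟪x, p⟫ ^ 2 / (1 + ‖p‖ ^ 2)) - 2 * ε * n
      + 2 * ε * ‖p‖ ^ 2 / (1 + ‖p‖ ^ 2) ≤ 0 := by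
  have hQ0 : 0 < 1 + ‖p‖ ^ 2 := by positivity
  set w : 𝔼 := t • p + (2 * ε) • x with hw
  have hwv : ∀ v, t * ⟪p, v⟫ + 2 * ε * ⟪x, v⟫ = ⟪w, v⟫ := by
    intro v; simp [hw, inner_add_left, inner_smul_left]
  have hwp : ⟪w, p⟫ = t * ‖p‖ ^ 2 + 2 * ε * ⟪x, p⟫ := by
    rw [← hwv, real_inner_self_eq_norm_sq]
  have hww : ‖w‖ ^ 2 = t ^ 2 * ‖p‖ ^ 2 + 4 * t * ε * ⟪x, p⟫ + 4 * ε ^ 2 * ‖x‖ ^ 2 := by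
    rw [← real_inner_self_eq_norm_sq w]
    simp only [hw, inner_add_left, inner_smul_left, inner_add_right, inner_smul_right,
      real_inner_self_eq_norm_sq, real_inner_comm x p]
    simp
    ring
  simp only [hwv] at hfirst hsecond
  have hBp : η • B p = ((1 + ‖p‖ ^ 2) * E) • w := by
    apply ext_inner_right ℝ
    intro v
    have := hfirst v
    simp only [inner_smul_left, RCLike.conj_to_real]
    rw [hB]
    rw [real_inner_comm] at this
    have h3 : η * (η * ⟪p, B v⟫ - (1 + ‖p‖ ^ 2) * E * ⟪w, v⟫) = 0 := by
      linarith
    rcases mul_eq_zero.1 h3 with h | h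
    · exact absurd h hη.ne'
    · linarith
  have hb : η * ⟪B p, p⟫ = (1 + ‖p‖ ^ 2) * E * ⟪w, p⟫ := by
    have := congrArg (fun z => ⟪z, p⟫) hBp
    simpa [inner_smul_left] using this
  have hb2 : η ^ 2 * ‖B p‖ ^ 2 = (1 + ‖p‖ ^ 2) ^ 2 * E ^ 2 * ‖w‖ ^ 2 := by
    have := congrArg (fun z => ‖z‖ ^ 2) hBp
    simp only [norm_smul, mul_pow, Real.norm_eq_abs, sq_abs] at this
    exact this
  have hgen := fun (v : 𝔼) => hsecond v
  have hN : ∀ v, η ^ 2 * (⟪T v v, p⟫ + ⟪B v, B v⟫) - 3 * (1 + ‖p‖ ^ 2) * E ^ 2 * (⟪w, v⟫ * ⟪w, v⟫)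
      + (1 + ‖p‖ ^ 2) * η * E * (⟪w, v⟫ * ⟪w, v⟫ - t * ⟪B v, v⟫ - 2 * ε * ⟪v, v⟫) ≤ 0 := by
    intro v
    have a1 := hfirst v
    have a2 := hsecond v
    have a3 : ⟪B v, p⟫ * η = (1 + ‖p‖ ^ 2) * E * ⟪w, v⟫ := by
      have h3 : η * (⟪B v, p⟫ * η - (1 + ‖p‖ ^ 2) * E * ⟪w, v⟫) = 0 := by linarith
      rcases mul_eq_zero.1 h3 with h | h
      · exact absurd h hη.ne'
      · linarith
    have a4 : 2 * ((2 * ⟪B v, p⟫) * (2 * η * (-E * ⟪w, v⟫))) =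
      -8 * ((1 + ‖p‖ ^ 2) * E * ⟪w, v⟫) * (E * ⟪w, v⟫) := by rw [← a3]; ring
    rw [a4] at a2
    rw [real_inner_self_eq_norm_sq, real_inner_self_eq_norm_sq]
    linarith
  have tr := rb_trace p (LinearMap.mk₂ ℝ (fun v v' => η ^ 2 * (⟪T v v', p⟫ + ⟪B v, B v'⟫)
      - 3 * (1 + ‖p‖ ^ 2) * E ^ 2 * (⟪w, v⟫ * ⟪w, v'⟫)
      + (1 + ‖p‖ ^ 2) * η * E * (⟪w, v⟫ * ⟪w, v'⟫ - t * ⟪B v, v'⟫ - 2 * ε * ⟪v, v'⟫))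
      (by intros; simp only [map_add, add_apply, inner_add_left, inner_add_right]; ring)
      (by intros; simp only [map_smul, smul_apply, inner_smul_left, inner_smul_right, RCLike.conj_to_real, smul_eq_mul]; ring)
      (by intros; simp only [map_add, inner_add_left, inner_add_right]; ring)
      (by intros; simp only [map_smul, inner_smul_left, inner_smul_right, RCLike.conj_to_real, smul_eq_mul]; ring))
  simp only [LinearMap.mk₂_apply] at tr
  have hle : ∑ i, (η ^ 2 * (⟪T (rb p i) (rb p i), p⟫ + ⟪B (rb p i), B (rb p i)⟫)
      - 3 * (1 + ‖p‖ ^ 2) * E ^ 2 * (⟪w, rb p i⟫ * ⟪w, rb p i⟫)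
      + (1 + ‖p‖ ^ 2) * η * E * (⟪w, rb p i⟫ * ⟪w, rb p i⟫ - t * ⟪B (rb p i), rb p i⟫
        - 2 * ε * ⟪rb p i, rb p i⟫)) ≤ 0 :=
    Finset.sum_nonpos fun i _ => hN _
  rw [tr] at hle
  have c1 : ∑ i, ⟪w, eb i⟫ * ⟪w, eb i⟫ = ‖w‖ ^ 2 := by
    have := eb_sum_inner w w
    rw [real_inner_self_eq_norm_sq] at this
    rw [← this]
    simp only [real_inner_comm w]
  have c2 : ∀ i : Fin n, ⟪(eb i : 𝔼), eb i⟫ = 1 := by intro i; simp [eb]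
  have c3 : ∑ i, ⟪T (eb i) (eb i), p⟫ = ∑ i, ⟪T p (eb i), eb i⟫ := by
    refine Finset.sum_congr rfl fun i _ => ?_
    rw [hT2, hT1 (eb i) p, real_inner_comm]
  simp only [Finset.sum_add_distrib, Finset.sum_sub_distrib, ← Finset.mul_sum, c1, c2, c3,
    real_inner_self_eq_norm_sq] at hle
  simp only [Finset.sum_const, Finset.card_univ, Fintype.card_fin, nsmul_eq_mul, mul_one] at hle
  refine jet_algebra n (∑ i, ⟪B (eb i), eb i⟫) ⟪B p, p⟫ (‖B p‖ ^ 2) (∑ i, ‖B (eb i)‖ ^ 2)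
    (‖p‖ ^ 2) (1 + ‖p‖ ^ 2) ⟪x, p⟫ (‖x‖ ^ 2) (∑ i, ⟪T p (eb i), eb i⟫) ⟪T p p, p⟫
    W f f' η E t ε (by exact_mod_cast hn) (by positivity) rfl hW hWQ hη hE hf' h1 h2
    (rb_cauchy p B hB) (by rw [hb, hwp]) (by rw [hb2, hww]) ?_
  rw [← hww, ← hwp]
  refine le_of_eq_of_le ?_ hle
  ring

/-- First and second order conditions for a product `Q η²`. -/
lemma product_test (Q Q1 η η1 : ℝ → ℝ) (Q2 η2 : ℝ)
    (hmax : IsLocalMax (fun s => Q s * η s ^ 2) 0)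
    (hQ : ∀ᶠ s in 𝓝 (0 : ℝ), HasDerivAt Q (Q1 s) s) (hQ2 : HasDerivAt Q1 Q2 0)
    (hη : ∀ᶠ s in 𝓝 (0 : ℝ), HasDerivAt η (η1 s) s) (hη2 : HasDerivAt η1 η2 0) :
    Q1 0 * η 0 ^ 2 + Q 0 * (2 * η 0 * η1 0) = 0 ∧
    Q2 * η 0 ^ 2 + 2 * (Q1 0 * (2 * η 0 * η1 0)) + Q 0 * (2 * η1 0 ^ 2 + 2 * η 0 * η2) ≤ 0 := by
  have hq := hQ.self_of_nhds
  have he := hη.self_of_nhds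
  refine second_deriv_test _ (fun s => Q1 s * η s ^ 2 + Q s * (2 * η s * η1 s)) _ hmax ?_ ?_
  · filter_upwards [hQ, hη] with s h1 h2
    refine (h1.mul (h2.pow 2)).congr_deriv ?_
    simp
  · refine ((hQ2.mul (he.pow 2)).add (hq.mul ((he.const_mul 2).mul hη2))).congr_deriv ?_
    simp
    ring

/-- Coordinate-free facts about the derivatives of the gradient. -/
lemma gradient_facts {Ω : Set 𝔼} (hΩ : IsOpen Ω) {u : 𝔼 → ℝ} (hu3 : ContDiffOn ℝ 3 u Ω) :
    (∀ y ∈ Ω, HasFDerivAt u (innerSL ℝ (gradient u y)) y) ∧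
    (∀ y ∈ Ω, HasFDerivAt (gradient u) (fderiv ℝ (gradient u) y) y) ∧
    (∀ y ∈ Ω, HasFDerivAt (fderiv ℝ (gradient u)) (fderiv ℝ (fderiv ℝ (gradient u)) y) y) ∧
    (∀ y ∈ Ω, ∀ a b, ⟪fderiv ℝ (gradient u) y a, b⟫ = ⟪a, fderiv ℝ (gradient u) y b⟫) ∧
    (∀ y ∈ Ω, ∀ a b, fderiv ℝ (fderiv ℝ (gradient u)) y a b =
      fderiv ℝ (fderiv ℝ (gradient u)) y b a) ∧
    (∀ y ∈ Ω, ∀ a b c, ⟪fderiv ℝ (fderiv ℝ (gradient u)) y a b, c⟫ =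
      ⟪b, fderiv ℝ (fderiv ℝ (gradient u)) y a c⟫) := by
  have hdu : ContDiffOn ℝ 2 (fderiv ℝ u) Ω := hu3.fderiv_of_isOpen hΩ (by norm_num)
  have hG : ContDiffOn ℝ 2 (gradient u) Ω :=
    ((InnerProductSpace.toDual ℝ 𝔼).symm.contDiff).comp_contDiffOn hdu
  have hB : ContDiffOn ℝ 1 (fderiv ℝ (gradient u)) Ω := hG.fderiv_of_isOpen hΩ (by norm_num)
  have huat : ∀ y ∈ Ω, ContDiffAt ℝ 3 u y := fun y hy => hu3.contDiffAt (hΩ.mem_nhds hy)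
  have hGat : ∀ y ∈ Ω, ContDiffAt ℝ 2 (gradient u) y := fun y hy => hG.contDiffAt (hΩ.mem_nhds hy)
  have hBat : ∀ y ∈ Ω, ContDiffAt ℝ 1 (fderiv ℝ (gradient u)) y :=
    fun y hy => hB.contDiffAt (hΩ.mem_nhds hy)
  have hinn : ∀ y w, ⟪gradient u y, w⟫ = fderiv ℝ u y w := by
    intro y w
    simp [gradient]
  have f2 : ∀ y ∈ Ω, HasFDerivAt (gradient u) (fderiv ℝ (gradient u) y) y :=
    fun y hy => ((hGat y hy).differentiableAt (by norm_num)).hasFDerivAt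
  have f3 : ∀ y ∈ Ω, HasFDerivAt (fderiv ℝ (gradient u)) (fderiv ℝ (fderiv ℝ (gradient u)) y) y :=
    fun y hy => ((hBat y hy).differentiableAt (by norm_num)).hasFDerivAt
  have f4 : ∀ y ∈ Ω, ∀ a b, ⟪fderiv ℝ (gradient u) y a, b⟫ = ⟪a, fderiv ℝ (gradient u) y b⟫ := by
    intro y hy a b
    have hd : DifferentiableAt ℝ (fderiv ℝ u) y :=
      (hdu.contDiffAt (hΩ.mem_nhds hy)).differentiableAt (by norm_num)
    have key : ∀ a b, ⟪fderiv ℝ (gradient u) y a, b⟫ = fderiv ℝ (fderiv ℝ u) y a b := by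
      intro a b
      have l1 := (f2 y hy).inner ℝ (hasFDerivAt_const b y)
      have l2 := hd.hasFDerivAt.clm_apply (hasFDerivAt_const b y)
      simp only [hinn] at l1
      have := congrArg (fun L => L a) (l1.unique l2)
      simpa using this
    have hs : IsSymmSndFDerivAt ℝ u y := (huat y hy).isSymmSndFDerivAt (by simp; norm_num)
    rw [key, real_inner_comm, key]
    exact hs a b
  refine ⟨?_, f2, f3, f4, ?_, ?_⟩
  · intro y hy
    have h := ((huat y hy).differentiableAt (by norm_num)).hasFDerivAt
    have e : innerSL ℝ (gradient u y) = fderiv ℝ u y := by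
      ext1 w
      rw [innerSL_apply_apply]
      exact hinn y w
    rw [e]
    exact h
  · intro y hy a b
    have hs : IsSymmSndFDerivAt ℝ (gradient u) y := (hGat y hy).isSymmSndFDerivAt (by simp)
    exact hs a b
  · intro y hy a b c
    have hb : ∀ b : 𝔼, HasFDerivAt (fun z => fderiv ℝ (gradient u) z b)
        ((fderiv ℝ (fderiv ℝ (gradient u)) y).flip b) y := fun b => by
      simpa using (f3 y hy).clm_apply (hasFDerivAt_const b y)
    have l1 := (hb b).inner ℝ (hasFDerivAt_const c y)
    have l2 := (hasFDerivAt_const b y).inner ℝ (hb c)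
    have hev : (fun z => ⟪fderiv ℝ (gradient u) z b, c⟫) =ᶠ[𝓝 y]
        (fun z => ⟪b, fderiv ℝ (gradient u) z c⟫) := by
      filter_upwards [hΩ.mem_nhds hy] with z hz
      exact f4 z hz b c
    have := (l1.congr_of_eventuallyEq hev.symm).unique l2
    have := congrArg (fun L => L a) this
    simpa using this

lemma W_hasFDerivAt {G : 𝔼 → 𝔼} {B : 𝔼 →L[ℝ] 𝔼} {y : 𝔼} (hG : HasFDerivAt G B y) :
    HasFDerivAt (fun z => Real.sqrt (1 + ‖G z‖ ^ 2))
      ((Real.sqrt (1 + ‖G y‖ ^ 2))⁻¹ • (innerSL ℝ (G y)).comp B) y := by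
  have h := ((hG.norm_sq).const_add 1).sqrt (by positivity)
  refine h.congr_fderiv ?_
  ext v
  simp
  ring

lemma meanCurv_eq {u : 𝔼 → ℝ} {y : 𝔼} {B : 𝔼 →L[ℝ] 𝔼} (hG : HasFDerivAt (gradient u) B y) (c : ℝ)
    (hB : ∀ a b, ⟪B a, b⟫ = ⟪a, B b⟫) (h : meanCurv u y + c = 0) :
    (∑ i, ⟪B (eb i), eb i⟫) * (1 + ‖gradient u y‖ ^ 2) - ⟪B (gradient u y), gradient u y⟫
      + c * (Real.sqrt (1 + ‖gradient u y‖ ^ 2)) ^ 3 = 0 := by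
  set p := gradient u y with hp
  set W := Real.sqrt (1 + ‖p‖ ^ 2) with hW
  have hWpos : 0 < W := Real.sqrt_pos.2 (by positivity)
  have hWsq : W ^ 2 = 1 + ‖p‖ ^ 2 := Real.sq_sqrt (by positivity)
  have hWd := W_hasFDerivAt hG
  rw [← hp, ← hW] at hWd
  have hinv := (hasDerivAt_inv (x := W) hWpos.ne').comp_hasFDerivAt_of_eq y hWd rfl
  have hs := hinv.smul hG
  have e : meanCurv u y = W⁻¹ * (∑ i, ⟪B (eb i), eb i⟫) - W⁻¹ ^ 3 * ⟪B p, p⟫ := by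
    have e1 : ∀ i : Fin n, ⟪(fderiv ℝ (fun y => (Real.sqrt (1 + ‖gradient u y‖ ^ 2))⁻¹ • gradient u y) y)
        (EuclideanSpace.single i (1 : ℝ)), EuclideanSpace.single i (1 : ℝ)⟫ =
        W⁻¹ * ⟪B (eb i), eb i⟫ - W⁻¹ ^ 3 * (⟪eb i, B p⟫ * ⟪eb i, p⟫) := by
      intro i
      have hfd : fderiv ℝ (fun y => (Real.sqrt (1 + ‖gradient u y‖ ^ 2))⁻¹ • gradient u y) y = _ :=
        hs.fderiv
      rw [hfd]
      change ⟪_, eb i⟫ = _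
      simp only [add_apply, smul_apply, ContinuousLinearMap.smulRight_apply,
        ContinuousLinearMap.comp_apply, innerSL_apply_apply, inner_add_left, inner_smul_left,
        RCLike.conj_to_real, smul_eq_mul, Function.comp]
      change _ * ⟪B (eb i), eb i⟫ + _ * (_ * ⟪p, B (eb i)⟫) * ⟪p, eb i⟫ = _
      rw [real_inner_comm (B (eb i)) p, hB (eb i) p, real_inner_comm (eb i) p, ← hp, ← hW]
      field_simp
      ring
    unfold meanCurv
    simp only [e1, Finset.sum_sub_distrib, ← Finset.mul_sum, eb_sum_inner]
  rw [e] at h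
  rw [← hWsq]
  field_simp at h
  linarith

/-- The derivative of the equation in the direction of the gradient. -/
lemma eq_deriv {Ω : Set 𝔼} (hΩ : IsOpen Ω) {u : 𝔼 → ℝ} (hu3 : ContDiffOn ℝ 3 u Ω)
    {f : ℝ → ℝ} (hf : ContDiff ℝ 1 f) (heq : ∀ x ∈ Ω, meanCurv u x + f (u x) = 0)
    {x : 𝔼} (hx : x ∈ Ω) {p : 𝔼} (hp : p = gradient u x) {B : 𝔼 →L[ℝ] 𝔼}
    (hBe : B = fderiv ℝ (gradient u) x)
    {T : 𝔼 →L[ℝ] 𝔼 →L[ℝ] 𝔼} (hT : T = fderiv ℝ (fderiv ℝ (gradient u)) x)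
    {W : ℝ} (hW : W = Real.sqrt (1 + ‖p‖ ^ 2)) :
    (∑ i, ⟪T p (eb i), eb i⟫) * (1 + ‖p‖ ^ 2) + (∑ i, ⟪B (eb i), eb i⟫) * (2 * ⟪B p, p⟫)
      - (⟪T p p, p⟫ + 2 * ‖B p‖ ^ 2)
      + (deriv f (u x) * ‖p‖ ^ 2 * W ^ 3 + f (u x) * (3 * W * ⟪B p, p⟫)) = 0 := by
  obtain ⟨f1, f2, f3, f4, f5, f6⟩ := gradient_facts hΩ hu3
  have hWpos : 0 < W := hW ▸ Real.sqrt_pos.2 (by positivity)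
  have hγ : HasDerivAt (fun s : ℝ => x + s • p) p 0 := by
    simpa using ((hasDerivAt_id (0 : ℝ)).smul_const p).const_add x
  have hγ0 : x = x + (0 : ℝ) • p := by simp
  have hG := (f2 x hx).comp_hasDerivAt_of_eq (0 : ℝ) hγ hγ0
  have hB := (f3 x hx).comp_hasDerivAt_of_eq (0 : ℝ) hγ hγ0
  have hu := (f1 x hx).comp_hasDerivAt_of_eq (0 : ℝ) hγ hγ0
  have hWd := (W_hasFDerivAt (f2 x hx)).comp_hasDerivAt_of_eq (0 : ℝ) hγ hγ0
  have hfu := ((hf.differentiable (by norm_num)) (u x)).hasDerivAt.comp_of_eq (0 : ℝ) hu (by simp)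
  rw [← hT] at hB
  rw [← hBe] at hG
  rw [← hp, ← hW, ← hBe] at hWd
  have htr : HasDerivAt (fun s : ℝ => ∑ i, ⟪fderiv ℝ (gradient u) (x + s • p) (eb i), eb i⟫)
      (∑ i, ⟪T p (eb i), eb i⟫) 0 := by
    refine HasDerivAt.fun_sum fun i _ => ?_
    have := (hB.clm_apply (hasDerivAt_const (0 : ℝ) (eb i))).inner ℝ (hasDerivAt_const (0 : ℝ) (eb i))
    refine this.congr_deriv ?_
    simp
  have hbg := (hB.clm_apply hG).inner ℝ hG
  have hQ := (hG.norm_sq).const_add 1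
  have hF := ((htr.mul hQ).sub hbg).add (hfu.mul (hWd.pow 3))
  have hz : ∀ᶠ s in 𝓝 (0 : ℝ), x + s • p ∈ Ω := by
    have : ContinuousAt (fun s : ℝ => x + s • p) 0 := hγ.continuousAt
    apply this.eventually
    simpa using hΩ.mem_nhds hx
  have hzero := hF.congr_of_eventuallyEq (f₁ := fun _ => (0 : ℝ)) (by
    filter_upwards [hz] with s hs
    have := meanCurv_eq (f2 _ hs) _ (f4 _ hs) (heq _ hs)
    exact this.symm)
  have hfin := hzero.unique (hasDerivAt_const (0 : ℝ) (0 : ℝ))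
  have hBs : ∀ a b, ⟪B a, b⟫ = ⟪a, B b⟫ := by rw [hBe]; exact f4 x hx
  simp only [Pi.pow_apply, Function.comp, zero_smul, add_zero, ← hp, ← hBe, ← hW, inner_add_left,
    innerSL_apply_apply, smul_apply, ContinuousLinearMap.comp_apply, smul_eq_mul,
    real_inner_self_eq_norm_sq] at hfin
  rw [hBs (B p) p, real_inner_self_eq_norm_sq, real_inner_comm (B p) p] at hfin
  rw [← hfin]
  simp
  field_simp
  ring

/-- Inequality at an interior maximum of `W² η²`. -/
lemma core_ineq (hn : 0 < n) {Ω : Set 𝔼} (hΩ : IsOpen Ω) {u : 𝔼 → ℝ} (hu3 : ContDiffOn ℝ 3 u Ω)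
    {f : ℝ → ℝ} (hf : ContDiff ℝ 1 f) (heq : ∀ x ∈ Ω, meanCurv u x + f (u x) = 0)
    {x : 𝔼} (hx : x ∈ Ω) (hf' : deriv f (u x) ≤ 0) (t ε τ b0 : ℝ) {p : 𝔼} (hp : p = gradient u x)
    {W E : ℝ} (hW : W = Real.sqrt (1 + ‖p‖ ^ 2))
    (hE : E = Real.exp (-(t * (u x - b0) + ε * ‖x‖ ^ 2))) (hη : 0 < E - τ)
    (hmax : IsLocalMax (fun y => (1 + ‖gradient u y‖ ^ 2) *
      (Real.exp (-(t * (u y - b0) + ε * ‖y‖ ^ 2)) - τ) ^ 2) x) :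
    (E - τ) / E * (f (u x) ^ 2 / n) + t * f (u x) / W - 2 * ε * f (u x) * ⟪x, p⟫ / W
      + t ^ 2 * ‖p‖ ^ 2 / (1 + ‖p‖ ^ 2)
      + 4 * t * ε * ⟪x, p⟫ / (1 + ‖p‖ ^ 2)
      + 4 * ε ^ 2 * (‖x‖ ^ 2 - ⟪x, p⟫ ^ 2 / (1 + ‖p‖ ^ 2)) - 2 * ε * n
      + 2 * ε * ‖p‖ ^ 2 / (1 + ‖p‖ ^ 2) ≤ 0 := by
  obtain ⟨f1, f2, f3, f4, f5, f6⟩ := gradient_facts hΩ hu3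
  have hWpos : 0 < W := hW ▸ Real.sqrt_pos.2 (by positivity)
  have hWsq : W ^ 2 = 1 + ‖p‖ ^ 2 := hW ▸ Real.sq_sqrt (by positivity)
  set B := fderiv ℝ (gradient u) x with hBe
  set T := fderiv ℝ (fderiv ℝ (gradient u)) x with hT
  have h1 := meanCurv_eq (f2 _ hx) _ (f4 _ hx) (heq _ hx)
  rw [← hp, ← hW, ← hBe] at h1
  have h2 := eq_deriv hΩ hu3 hf heq hx hp hBe hT hW
  have htest : ∀ v, (2 * ⟪B v, p⟫) * (E - τ) ^ 2
      + (1 + ‖p‖ ^ 2) * (2 * (E - τ) * (-E * (t * ⟪p, v⟫ + 2 * ε * ⟪x, v⟫))) = 0 ∧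
      (2 * ⟪T v v, p⟫ + 2 * ‖B v‖ ^ 2) * (E - τ) ^ 2
      + 2 * ((2 * ⟪B v, p⟫) * (2 * (E - τ) * (-E * (t * ⟪p, v⟫ + 2 * ε * ⟪x, v⟫))))
      + (1 + ‖p‖ ^ 2) * (2 * (-E * (t * ⟪p, v⟫ + 2 * ε * ⟪x, v⟫)) ^ 2
        + 2 * (E - τ) * (E * ((t * ⟪p, v⟫ + 2 * ε * ⟪x, v⟫) ^ 2
          - (t * ⟪B v, v⟫ + 2 * ε * ‖v‖ ^ 2)))) ≤ 0 := by
    intro v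
    have hγ : ∀ s : ℝ, HasDerivAt (fun s : ℝ => x + s • v) v s := by
      intro s
      simpa using ((hasDerivAt_id s).smul_const v).const_add x
    have hγ0 : x = x + (0 : ℝ) • v := by simp
    have hz : ∀ᶠ s in 𝓝 (0 : ℝ), x + s • v ∈ Ω := by
      apply (hγ 0).continuousAt.eventually
      simpa using hΩ.mem_nhds hx
    have hG : ∀ s, x + s • v ∈ Ω → HasDerivAt (fun s : ℝ => gradient u (x + s • v))
        (fderiv ℝ (gradient u) (x + s • v) v) s := fun s hs =>
      (f2 _ hs).comp_hasDerivAt_of_eq s (hγ s) rfl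
    have hu : ∀ s, x + s • v ∈ Ω → HasDerivAt (fun s : ℝ => u (x + s • v))
        ⟪gradient u (x + s • v), v⟫ s := fun s hs =>
      (f1 _ hs).comp_hasDerivAt_of_eq s (hγ s) rfl
    have hB : HasDerivAt (fun s : ℝ => fderiv ℝ (gradient u) (x + s • v) v) (T v v) 0 := by
      have := ((f3 x hx).comp_hasDerivAt_of_eq (0 : ℝ) (hγ 0) hγ0).clm_apply
        (hasDerivAt_const (0 : ℝ) v)
      refine this.congr_deriv ?_
      simp [hT]
    have h0 : x + (0 : ℝ) • v ∈ Ω := by simpa using hx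
    have hexp : ∀ s, x + s • v ∈ Ω → HasDerivAt
        (fun s : ℝ => Real.exp (-(t * (u (x + s • v) - b0) + ε * ‖x + s • v‖ ^ 2)))
        (Real.exp (-(t * (u (x + s • v) - b0) + ε * ‖x + s • v‖ ^ 2)) *
          (-(t * ⟪gradient u (x + s • v), v⟫ + ε * (2 * ⟪x + s • v, v⟫)))) s := by
      intro s hs
      exact (((((hu s hs).sub_const b0).const_mul t).add
        (((hγ s).norm_sq).const_mul ε)).neg).exp
    have hlm : IsLocalMax (fun s : ℝ => (1 + ‖gradient u (x + s • v)‖ ^ 2) *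
        (Real.exp (-(t * (u (x + s • v) - b0) + ε * ‖x + s • v‖ ^ 2)) - τ) ^ 2) 0 := by
      have hc : ContinuousAt (fun s : ℝ => x + s • v) 0 := (hγ 0).continuousAt
      have ht : Tendsto (fun s : ℝ => x + s • v) (𝓝 0) (𝓝 x) := by
        have := hc.tendsto
        simpa using this
      have := ht.eventually hmax
      filter_upwards [this] with s hs
      simpa using hs
    have key := product_test
      (fun s : ℝ => 1 + ‖gradient u (x + s • v)‖ ^ 2)
      (fun s : ℝ => 2 * ⟪gradient u (x + s • v), fderiv ℝ (gradient u) (x + s • v) v⟫)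
      (fun s : ℝ => Real.exp (-(t * (u (x + s • v) - b0) + ε * ‖x + s • v‖ ^ 2)) - τ)
      (fun s : ℝ => Real.exp (-(t * (u (x + s • v) - b0) + ε * ‖x + s • v‖ ^ 2)) *
          (-(t * ⟪gradient u (x + s • v), v⟫ + ε * (2 * ⟪x + s • v, v⟫))))
      _ _ hlm
      (by filter_upwards [hz] with s hs
          exact ((hG s hs).norm_sq).const_add 1)
      (((hG 0 h0).inner ℝ hB).const_mul 2)
      (by filter_upwards [hz] with s hs
          exact (hexp s hs).sub_const τ)
      ((hexp 0 h0).mul (((((hG 0 h0).inner ℝ (hasDerivAt_const (0 : ℝ) v)).const_mul t).add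
        ((((hγ 0).inner ℝ (hasDerivAt_const (0 : ℝ) v)).const_mul 2).const_mul ε)).neg))
    simp only [zero_smul, add_zero, ← hp, ← hBe, ← hE, inner_zero_right, zero_add,
      real_inner_self_eq_norm_sq] at key
    rw [real_inner_comm (B v) p, real_inner_comm (T v v) p] at key
    obtain ⟨k1, k2⟩ := key
    constructor
    · rw [← k1]; ring
    · refine le_of_eq_of_le ?_ k2
      ring
  exact jet_ineq hn p x B T (f4 x hx) (f5 x hx) (f6 x hx) W (f (u x)) (deriv f (u x)) (E - τ) E t ε
    hWpos hWsq hη (hE ▸ Real.exp_pos _) hf' h1 h2 (fun v => (htest v).1) (fun v => (htest v).2)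

set_option maxHeartbeats 1000000 in
/-- Numerical contradiction at the maximum point. -/
lemma num_contra (nn P Q W f C t τ ε E X r A1 L : ℝ) (hn : 0 < nn) (hP : 0 ≤ P) (hQ : Q = 1 + P)
    (hW : 0 < W) (hWQ : W ^ 2 = Q) (ht : 0 < t) (hτ : 0 < τ) (hτ2 : τ ≤ 1 / 2)
    (hτC : τ * C ≤ t / 4) (hε : 0 < ε) (hE : τ < E)
    (hfC : |f| ≤ C) (hr : 0 ≤ r) (hX : X ^ 2 ≤ r ^ 2 * P) (hrL : ε * r ^ 2 ≤ L)
    (hA1 : nn / 2 < A1) (hPA : A1 ≤ P) (hZ : 1 < Q * (E - τ) ^ 2)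
    (hs1 : (2 * C + 4 * t) * Real.sqrt (ε * L) + 2 * ε * nn < t ^ 2 * ((A1 - nn / 2) / (1 + A1)))
    (hs2 : (2 * C + 4 * t) * Real.sqrt (ε * L) + 2 * ε * nn < t ^ 2 / 2)
    (hmain : (E - τ) / E * (f ^ 2 / nn) + t * f / W - 2 * ε * f * X / W + t ^ 2 * P / Q
      + 4 * t * ε * X / Q + 4 * ε ^ 2 * (r ^ 2 - X ^ 2 / Q) - 2 * ε * nn + 2 * ε * P / Q ≤ 0) :
    False := by
  have hQ0 : 0 < Q := by rw [hQ]; linarith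
  have hC : 0 ≤ C := (abs_nonneg f).trans hfC
  have hE0 : 0 < E := hτ.trans hE
  have hW1 : 1 ≤ W := by nlinarith
  have hXW : |X| ≤ r * W := by
    apply abs_le_of_sq_le_sq _ (by positivity)
    calc X ^ 2 ≤ r ^ 2 * P := hX
      _ ≤ r ^ 2 * Q := by gcongr; linarith
      _ = (r * W) ^ 2 := by rw [← hWQ]; ring
  have hXW1 : |X / W| ≤ r := by
    rw [abs_div, abs_of_pos hW, div_le_iff₀ hW]; exact hXW
  have hXQ : |X / Q| ≤ r := by
    rw [abs_div, abs_of_pos hQ0, div_le_iff₀ hQ0]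
    refine hXW.trans ?_
    gcongr
    nlinarith
  have hεr : ε * r ≤ Real.sqrt (ε * L) := by
    apply Real.le_sqrt_of_sq_le
    nlinarith
  have hX2 : X ^ 2 / Q ≤ r ^ 2 := by
    rw [div_le_iff₀ hQ0]
    refine hX.trans ?_
    gcongr
    linarith
  have b1 : f * (X / W) ≤ C * r := by
    calc f * (X / W) ≤ |f * (X / W)| := le_abs_self _
      _ = |f| * |X / W| := abs_mul _ _
      _ ≤ C * r := by gcongr
  have b2 : - r ≤ X / Q := (abs_le.1 hXQ).1
  have b3 : 2 * ε * f * X / W ≤ 2 * C * (ε * r) := by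
    calc 2 * ε * f * X / W = 2 * ε * (f * (X / W)) := by ring
      _ ≤ 2 * ε * (C * r) := by gcongr
      _ = _ := by ring
  have b4 : - (4 * t * (ε * r)) ≤ 4 * t * ε * X / Q := by
    calc - (4 * t * (ε * r)) = 4 * t * ε * (-r) := by ring
      _ ≤ 4 * t * ε * (X / Q) := by gcongr
      _ = _ := by ring
  have b5 : 0 ≤ 4 * ε ^ 2 * (r ^ 2 - X ^ 2 / Q) := mul_nonneg (by positivity) (by linarith)
  have b6 : 0 ≤ 2 * ε * P / Q := by positivity
  have b7 : (2 * C + 4 * t) * (ε * r) ≤ (2 * C + 4 * t) * Real.sqrt (ε * L) := by gcongr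
  have hm : (E - τ) / E * (f ^ 2 / nn) + t * f / W + t ^ 2 * P / Q ≤
      (2 * C + 4 * t) * Real.sqrt (ε * L) + 2 * ε * nn := by linarith
  by_cases hcase : E ≤ 2 * (E - τ)
  · have c1 : 1 / 2 * (f ^ 2 / nn) ≤ (E - τ) / E * (f ^ 2 / nn) := by
      have : 1 / 2 ≤ (E - τ) / E := by
        rw [div_le_div_iff₀ (by norm_num) hE0]
        linarith
      exact mul_le_mul_of_nonneg_right this (by positivity)
    have c2 : 0 ≤ 1 / (2 * nn) * (f + t * nn / W) ^ 2 := by positivity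
    have c3 : 1 / (2 * nn) * (f + t * nn / W) ^ 2 = 1 / 2 * (f ^ 2 / nn) + t * f / W
        + t ^ 2 * (nn / 2) / Q := by
      rw [← hWQ]; field_simp
      ring
    have c4 : (A1 - nn / 2) / (1 + A1) ≤ (P - nn / 2) / Q := by
      rw [div_le_div_iff₀ (by linarith) hQ0, hQ]
      have : 0 ≤ (P - A1) * (1 + nn / 2) := mul_nonneg (by linarith) (by linarith)
      linarith
    have c5 : t ^ 2 * ((A1 - nn / 2) / (1 + A1)) ≤ t ^ 2 * ((P - nn / 2) / Q) := by gcongr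
    have c6 : t ^ 2 * ((P - nn / 2) / Q) = t ^ 2 * P / Q - t ^ 2 * (nn / 2) / Q := by ring
    linarith
  · push Not at hcase
    have d1 : E - τ < τ := by linarith
    have d2 : 1 < W * τ := by
      have : 1 < (W * τ) ^ 2 := by
        calc 1 < Q * (E - τ) ^ 2 := hZ
          _ ≤ Q * τ ^ 2 := by
            have : 0 ≤ E - τ := by linarith
            gcongr
          _ = _ := by rw [← hWQ]; ring
      exact (one_lt_sq_iff₀ (by positivity)).1 this
    have d3 : 1 / W ≤ τ := by rw [div_le_iff₀ hW]; linarith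
    have d4 : - (t * (t / 4)) ≤ t * f / W := by
      have : |f / W| ≤ C * τ := by
        rw [abs_div, abs_of_pos hW, div_eq_mul_one_div]
        gcongr
      have := (abs_le.1 this).1
      calc - (t * (t / 4)) = t * (-(t / 4)) := by ring
        _ ≤ t * (f / W) := by gcongr; linarith
        _ = _ := by ring
    have d5 : t ^ 2 * (3 / 4) ≤ t ^ 2 * P / Q := by
      have : P / Q = 1 - (1 / W) ^ 2 := by
        have : P = W ^ 2 - 1 := by linarith
        rw [this, ← hWQ]; field_simp
      rw [mul_div_assoc, this]
      have hw : (1 / W) ^ 2 ≤ (1 / 2) ^ 2 :=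
        pow_le_pow_left₀ (by positivity) (d3.trans hτ2) 2
      have hw2 : 3 / 4 ≤ 1 - (1 / W) ^ 2 := by linarith
      exact mul_le_mul_of_nonneg_left hw2 (by positivity)
    have d6 : 0 ≤ (E - τ) / E * (f ^ 2 / nn) := by
      have : 0 ≤ E - τ := by linarith
      positivity
    linarith

/-- Choice of parameters. -/
lemma exists_params (nn C a0 r0 A1 ρ : ℝ) (hC : 0 ≤ C) (hρ : ρ < 1) (hA1 : nn / 2 < A1)
    (hA0 : 0 < A1) :
    ∃ t τ ε : ℝ, 0 < t ∧ 0 < τ ∧ τ ≤ 1 / 2 ∧ τ * C ≤ t / 4 ∧ 0 < ε ∧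
      ρ < Real.exp (-(t * a0 + ε * r0)) - τ ∧
      (2 * C + 4 * t) * Real.sqrt (ε * (-Real.log τ)) + 2 * ε * nn <
        t ^ 2 * ((A1 - nn / 2) / (1 + A1)) ∧
      (2 * C + 4 * t) * Real.sqrt (ε * (-Real.log τ)) + 2 * ε * nn < t ^ 2 / 2 := by
  have h1 : ∀ᶠ t in 𝓝[>] (0 : ℝ), ρ < Real.exp (-(t * a0)) := by
    apply eventually_nhdsWithin_of_eventually_nhds
    have hc : ContinuousAt (fun t : ℝ => Real.exp (-(t * a0))) 0 := by fun_prop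
    exact hc.eventually (lt_mem_nhds (by simpa using hρ))
  obtain ⟨t, ht1, ht⟩ := (h1.and self_mem_nhdsWithin).exists
  have ht : 0 < t := ht
  have h2 : ∀ᶠ τ in 𝓝[>] (0 : ℝ), ρ < Real.exp (-(t * a0)) - τ ∧ τ * C < t / 4 ∧ τ < 1 / 2 := by
    apply eventually_nhdsWithin_of_eventually_nhds
    have hc : ContinuousAt (fun τ : ℝ => Real.exp (-(t * a0)) - τ) 0 := by fun_prop
    have hc2 : ContinuousAt (fun τ : ℝ => τ * C) 0 := by fun_prop
    refine (hc.eventually (lt_mem_nhds (by simpa using ht1))).and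
      ((hc2.eventually (gt_mem_nhds (by simpa using ht))).and (gt_mem_nhds (by norm_num)))
  obtain ⟨τ, ⟨hτ1, hτ2, hτ3⟩, hτ⟩ := (h2.and self_mem_nhdsWithin).exists
  have hc1 : 0 < t ^ 2 * ((A1 - nn / 2) / (1 + A1)) := by
    have : 0 < A1 - nn / 2 := by linarith
    positivity
  have h3 : ∀ᶠ ε in 𝓝[>] (0 : ℝ), ρ < Real.exp (-(t * a0 + ε * r0)) - τ ∧
      (2 * C + 4 * t) * Real.sqrt (ε * (-Real.log τ)) + 2 * ε * nn <
        t ^ 2 * ((A1 - nn / 2) / (1 + A1)) ∧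
      (2 * C + 4 * t) * Real.sqrt (ε * (-Real.log τ)) + 2 * ε * nn < t ^ 2 / 2 := by
    apply eventually_nhdsWithin_of_eventually_nhds
    have hc : ContinuousAt (fun ε : ℝ => Real.exp (-(t * a0 + ε * r0)) - τ) 0 := by fun_prop
    have hc2 : ContinuousAt
      (fun ε : ℝ => (2 * C + 4 * t) * Real.sqrt (ε * (-Real.log τ)) + 2 * ε * nn) 0 := by fun_prop
    refine (hc.eventually (lt_mem_nhds (by simpa using hτ1))).and
      ((hc2.eventually (gt_mem_nhds (by simpa using hc1))).and
      (hc2.eventually (gt_mem_nhds ?_)))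
    simp
    positivity
  obtain ⟨ε, ⟨hε1, hε2, hε3⟩, hε⟩ := (h3.and self_mem_nhdsWithin).exists
  exact ⟨t, τ, ε, ht, hτ, hτ3.le, hτ2.le, hε, hε1, hε2, hε3⟩

/-- The gradient bound in real form. -/
lemma gradient_bound_real {Ω : Set 𝔼} (hΩ : IsOpen Ω)
    {f : ℝ → ℝ} (hf : ContDiff ℝ 1 f) {u : 𝔼 → ℝ}
    (hu3 : ContDiffOn ℝ 3 u Ω) (hucl : ContinuousOn u (closure Ω)) {Du : 𝔼 → 𝔼}
    (hDu : ∀ x ∈ Ω, Du x = gradient u x) (hDuc : ContinuousOn Du (closure Ω))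
    (heq : ∀ x ∈ Ω, meanCurv u x + f (u x) = 0)
    {C : ℝ} (hfb : ∀ x ∈ Ω, |f (u x)| ≤ C) (hf' : ∀ x ∈ Ω, deriv f (u x) ≤ 0)
    {b0 : ℝ} (hb0 : ∀ x ∈ Ω, b0 ≤ u x) {A : ℝ} (hA0 : 0 ≤ A) (hAn : (n : ℝ) / 2 ≤ A ^ 2)
    (hAf : ∀ y ∈ frontier Ω, ‖Du y‖ ≤ A) {x0 : 𝔼} (hx0 : x0 ∈ Ω) : ‖gradient u x0‖ ≤ A := by
  by_contra hcon
  push Not at hcon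
  have hn : 0 < n := by
    rcases Nat.eq_zero_or_pos n with h | h
    · subst h
      have : gradient u x0 = 0 := Subsingleton.elim _ _
      rw [this, norm_zero] at hcon
      linarith
    · exact h
  have hsq : A ^ 2 < ‖gradient u x0‖ ^ 2 := by gcongr
  obtain ⟨A1, hA1, hA1'⟩ := exists_between hsq
  have hA1p : 0 < A1 := lt_of_le_of_lt (sq_nonneg A) hA1
  set Q0 := 1 + ‖gradient u x0‖ ^ 2 with hQ0
  have hQ0p : 0 < Q0 := by positivity
  set ρ := Real.sqrt ((1 + A1) / Q0) with hρ
  have hρ1 : ρ < 1 := by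
    rw [hρ, Real.sqrt_lt' one_pos, div_lt_iff₀ hQ0p]
    linarith
  have hC : 0 ≤ C := (abs_nonneg _).trans (hfb x0 hx0)
  obtain ⟨t, τ, ε, ht, hτ, hτ2, hτC, hε, hstart, hs1, hs2⟩ :=
    exists_params n C (u x0 - b0) (‖x0‖ ^ 2) A1 ρ hC hρ1 (lt_of_le_of_lt hAn hA1) hA1p
  set Ef : 𝔼 → ℝ := fun y => Real.exp (-(t * (u y - b0) + ε * ‖y‖ ^ 2)) with hEf
  have hEc : ContinuousOn Ef (closure Ω) := by
    simp only [hEf]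
    fun_prop
  have hucl0 : ∀ y ∈ closure Ω, b0 ≤ u y := by
    intro y hy
    have hcw : Tendsto u (𝓝[Ω] y) (𝓝 (u y)) := ((hucl y hy).mono subset_closure).tendsto
    have : (𝓝[Ω] y).NeBot := mem_closure_iff_nhdsWithin_neBot.1 hy
    exact ge_of_tendsto hcw (by filter_upwards [self_mem_nhdsWithin] with z hz using hb0 z hz)
  have hE1 : ∀ y ∈ closure Ω, Ef y ≤ 1 := by
    intro y hy
    simp only [hEf]
    rw [Real.exp_le_one_iff]
    have : 0 ≤ t * (u y - b0) := mul_nonneg ht.le (by linarith [hucl0 y hy])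
    have : 0 ≤ ε * ‖y‖ ^ 2 := by positivity
    linarith
  have hEL : ∀ y ∈ closure Ω, τ ≤ Ef y → ε * ‖y‖ ^ 2 ≤ -Real.log τ := by
    intro y hy h
    have := (Real.log_le_iff_le_exp hτ).2 h
    have : 0 ≤ t * (u y - b0) := mul_nonneg ht.le (by linarith [hucl0 y hy])
    linarith
  set K : Set 𝔼 := closure Ω ∩ Ef ⁻¹' Ici τ with hK
  have hKc : IsCompact K := by
    apply Metric.isCompact_of_isClosed_isBounded
    · exact hEc.preimage_isClosed_of_isClosed isClosed_closure isClosed_Ici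
    · refine (Metric.isBounded_closedBall (x := (0 : 𝔼))
        (r := Real.sqrt (-Real.log τ / ε))).subset ?_
      rintro y ⟨hy1, hy2⟩
      rw [mem_closedBall_zero_iff]
      apply Real.le_sqrt_of_sq_le
      rw [le_div_iff₀ hε]
      linarith [hEL y hy1 hy2]
  have hρ0 : 0 ≤ ρ := Real.sqrt_nonneg _
  have hx0K : x0 ∈ K := ⟨subset_closure hx0, by
    change τ ≤ Ef x0
    simp only [hEf]
    linarith⟩
  have hZc : ContinuousOn (fun y => (1 + ‖Du y‖ ^ 2) * (Ef y - τ) ^ 2) K := by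
    have h1 : ContinuousOn Du K := hDuc.mono inter_subset_left
    have h2 : ContinuousOn Ef K := hEc.mono inter_subset_left
    exact (continuousOn_const.add (h1.norm.pow 2)).mul ((h2.sub continuousOn_const).pow 2)
  obtain ⟨x1, hx1K, hx1max⟩ := hKc.exists_isMaxOn ⟨x0, hx0K⟩ hZc
  have hmax : ∀ y ∈ K, (1 + ‖Du y‖ ^ 2) * (Ef y - τ) ^ 2 ≤ (1 + ‖Du x1‖ ^ 2) * (Ef x1 - τ) ^ 2 :=
    fun y hy => hx1max hy
  have hZ : 1 + A1 < (1 + ‖Du x1‖ ^ 2) * (Ef x1 - τ) ^ 2 := by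
    refine lt_of_lt_of_le ?_ (hmax x0 hx0K)
    rw [hDu x0 hx0]
    have h1 : ρ ^ 2 = (1 + A1) / Q0 := Real.sq_sqrt (by positivity)
    calc 1 + A1 = Q0 * ρ ^ 2 := by rw [h1]; field_simp
      _ < Q0 * (Ef x0 - τ) ^ 2 := by gcongr
  have hτE : τ ≤ Ef x1 := hx1K.2
  have hη1 : (Ef x1 - τ) ^ 2 ≤ 1 := by
    have := hE1 x1 hx1K.1
    exact pow_le_one₀ (by linarith) (by linarith)
  have hP : A1 < ‖Du x1‖ ^ 2 := by
    have : (1 + ‖Du x1‖ ^ 2) * (Ef x1 - τ) ^ 2 ≤ (1 + ‖Du x1‖ ^ 2) * 1 := by gcongr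
    linarith
  have hx1 : x1 ∈ Ω := by
    by_contra hnot
    have hfr : x1 ∈ frontier Ω := by
      rw [hΩ.frontier_eq]; exact ⟨hx1K.1, hnot⟩
    have := hAf x1 hfr
    have : ‖Du x1‖ ^ 2 ≤ A ^ 2 := by gcongr
    linarith
  have hτE' : τ < Ef x1 := by
    rcases hτE.lt_or_eq with h | h
    · exact h
    · rw [← h] at hZ; simp at hZ; linarith
  rw [hDu x1 hx1] at hP hZ hmax
  have hlm : IsLocalMax (fun y => (1 + ‖gradient u y‖ ^ 2) *
      (Real.exp (-(t * (u y - b0) + ε * ‖y‖ ^ 2)) - τ) ^ 2) x1 := by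
    have hcat : ContinuousAt Ef x1 :=
      hEc.continuousAt (mem_of_superset (hΩ.mem_nhds hx1) subset_closure)
    filter_upwards [hΩ.mem_nhds hx1, hcat.eventually (lt_mem_nhds hτE')] with y hy hy2
    have := hmax y ⟨subset_closure hy, hy2.le⟩
    rw [hDu y hy] at this
    exact this
  have hcore := core_ineq hn hΩ hu3 hf heq hx1 (hf' x1 hx1) t ε τ b0 rfl rfl
    (E := Ef x1) rfl (by linarith) hlm
  refine num_contra n (‖gradient u x1‖ ^ 2) (1 + ‖gradient u x1‖ ^ 2)
    (Real.sqrt (1 + ‖gradient u x1‖ ^ 2)) (f (u x1)) C t τ ε (Ef x1) ⟪x1, gradient u x1⟫ ‖x1‖ A1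
    (-Real.log τ) (by exact_mod_cast hn) (by positivity) rfl (Real.sqrt_pos.2 (by positivity))
    (Real.sq_sqrt (by positivity)) ht hτ hτ2 hτC hε hτE' (hfb x1 hx1) (norm_nonneg _) ?_
    (hEL x1 hx1K.1 hτE) (lt_of_le_of_lt hAn hA1) hP.le (by linarith) hs1 hs2 hcore
  rw [← mul_pow, sq_le_sq, abs_of_nonneg (a := ‖x1‖ * _) (by positivity)]
  exact abs_real_inner_le_norm _ _

/-- The Euclidean instance of the paper's interior gradient estimate
(Theorem 2.4 / Theorem A.2). -/
theorem gradient_estimate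
    (n : ℕ) (Ω : Set (EuclideanSpace ℝ (Fin n)))
    (hne : Ω.Nonempty) (hΩ : IsOpen Ω) (hconn : IsConnected Ω)
    (f : ℝ → ℝ) (hf : ContDiff ℝ 1 f)
    (u : EuclideanSpace ℝ (Fin n) → ℝ)
    (hu3 : ContDiffOn ℝ 3 u Ω) (hucl : ContinuousOn u (closure Ω))
    (Du : EuclideanSpace ℝ (Fin n) → EuclideanSpace ℝ (Fin n))
    (hDu : ∀ x ∈ Ω, Du x = gradient u x) (hDuc : ContinuousOn Du (closure Ω))
    (heq : ∀ x ∈ Ω, meanCurv u x + f (u x) = 0)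
    (hfb : ∃ C, ∀ x ∈ Ω, |f (u x)| ≤ C)
    (hf' : ∀ x ∈ Ω, deriv f (u x) ≤ 0)
    (hbdd : BddBelow (u '' Ω)) :
    ∀ x ∈ Ω, ENNReal.ofReal ‖gradient u x‖
      ≤ max (ENNReal.ofReal (Real.sqrt ((n : ℝ) / 2)))
          (⨆ p ∈ frontier Ω, ENNReal.ofReal ‖Du p‖) := by
  intro x hx
  obtain ⟨C, hC⟩ := hfb
  obtain ⟨b0, hb0⟩ := hbdd
  by_contra hcon
  push Not at hcon
  set M : ℝ≥0∞ := max (ENNReal.ofReal (Real.sqrt ((n : ℝ) / 2)))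
          (⨆ p ∈ frontier Ω, ENNReal.ofReal ‖Du p‖) with hM
  have hMtop : M ≠ ∞ := (hcon.trans ENNReal.ofReal_lt_top).ne
  have hbound := gradient_bound_real hΩ hf hu3 hucl hDu hDuc heq hC hf'
    (fun y hy => hb0 (mem_image_of_mem u hy)) (A := M.toReal) ENNReal.toReal_nonneg ?_ ?_ hx
  · have := ENNReal.ofReal_le_ofReal hbound
    rw [ENNReal.ofReal_toReal hMtop] at this
    exact absurd hcon (not_lt.2 this)
  · have h1 : Real.sqrt ((n : ℝ) / 2) ≤ M.toReal :=
      (ENNReal.ofReal_le_iff_le_toReal hMtop).1 (le_max_left _ _)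
    exact (Real.sqrt_le_left ENNReal.toReal_nonneg).1 h1
  · intro y hy
    refine (ENNReal.ofReal_le_iff_le_toReal hMtop).1 (le_trans ?_ (le_max_right _ _))
    exact le_iSup₂ (f := fun p (_ : p ∈ frontier Ω) => ENNReal.ofReal ‖Du p‖) y hy
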